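/- arXiv:1905.07616 — 2 statements merged into one kernel-verified Lean document; each statement's English description precedes it below -/
import Mathlib

section
/- The number of Straight hands — 5-card hands whose set of values is a straight value-set but whose cards do not all have the same suit (so the hand is neither a Royal Flush nor a Straight Flush) — equals 10200. -/
/-- A card is a pair of a value in `Fin 13` (values 0–12 representing
2,3,4,5,6,7,8,9,10,J,Q,K,A) and a suit in `Fin 4`. -/
abbrev Card : Type := Fin 13 × Fin 4

/-- The set of all 5-card poker hands: 5-element subsets of the 52-card deck. -/
def pokerHands : Finset (Finset Card) :=
  (Finset.univ : Finset Card).powersetCard 5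

/-- The set of values appearing in a hand. -/
def handValues (h : Finset Card) : Finset (Fin 13) := h.image Prod.fst

/-- The number of cards of the hand `h` having value `v`. -/
def countValue (h : Finset Card) (v : Fin 13) : ℕ :=
  (h.filter fun c => c.1 = v).card

/-- All cards of the hand have the same suit. -/
def SameSuit (h : Finset Card) : Prop := ∃ s : Fin 4, ∀ c ∈ h, c.2 = s

instance : DecidablePred SameSuit := fun h =>
  inferInstanceAs (Decidable (∃ s : Fin 4, ∀ c ∈ h, c.2 = s))

/-- The 10 straight value-sets: `{12,0,1,2,3}` (representing A,2,3,4,5) and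
`{i,i+1,i+2,i+3,i+4}` for `0 ≤ i ≤ 8`. -/
def straightValueSets : Finset (Finset (Fin 13)) :=
  { ({12, 0, 1, 2, 3} : Finset (Fin 13)),
    {0, 1, 2, 3, 4}, {1, 2, 3, 4, 5}, {2, 3, 4, 5, 6}, {3, 4, 5, 6, 7},
    {4, 5, 6, 7, 8}, {5, 6, 7, 8, 9}, {6, 7, 8, 9, 10}, {7, 8, 9, 10, 11},
    {8, 9, 10, 11, 12} }

/-- Royal Flush: the set of values is exactly `{8,9,10,11,12}`
(i.e. 10, J, Q, K, A) and all cards have the same suit. -/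
def RoyalFlush (h : Finset Card) : Prop :=
  handValues h = {8, 9, 10, 11, 12} ∧ SameSuit h

/-- Straight Flush: all cards have the same suit and the set of values is a
straight value-set other than `{8,9,10,11,12}`. -/
def StraightFlush (h : Finset Card) : Prop :=
  SameSuit h ∧ handValues h ∈ straightValueSets ∧
    handValues h ≠ ({8, 9, 10, 11, 12} : Finset (Fin 13))

/-- Four of a Kind: for some value `v`, the hand contains all 4 cards of
value `v` plus one additional card of a different value. -/
def FourOfAKind (h : Finset Card) : Prop :=
  ∃ v : Fin 13, countValue h v = 4 ∧ ∃ c ∈ h, c.1 ≠ v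

/-- Full House: there are distinct values `v ≠ w` such that exactly 3 cards
of the hand have value `v` and exactly 2 cards have value `w`. -/
def FullHouse (h : Finset Card) : Prop :=
  ∃ v w : Fin 13, v ≠ w ∧ countValue h v = 3 ∧ countValue h w = 2

/-- Flush: all cards have the same suit and the set of values is not a
straight value-set. -/
def Flush (h : Finset Card) : Prop :=
  SameSuit h ∧ handValues h ∉ straightValueSets

/-- Straight: the set of values is a straight value-set but the cards are
not all of the same suit. -/
def Straight (h : Finset Card) : Prop :=
  handValues h ∈ straightValueSets ∧ ¬ SameSuit h

/-- Three of a Kind: for some value `v`, exactly 3 cards of the hand have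
value `v` and the remaining 2 cards have two further distinct values. -/
def ThreeOfAKind (h : Finset Card) : Prop :=
  ∃ v : Fin 13, countValue h v = 3 ∧
    ∃ a b : Fin 13, a ≠ b ∧ a ≠ v ∧ b ≠ v ∧
      countValue h a = 1 ∧ countValue h b = 1

/-- Two Pair: there are distinct values `v ≠ w` such that exactly 2 cards of
the hand have value `v`, exactly 2 cards have value `w`, and the remaining
card has a value different from both. -/
def TwoPair (h : Finset Card) : Prop :=
  ∃ v w : Fin 13, v ≠ w ∧ countValue h v = 2 ∧ countValue h w = 2 ∧
    ∃ c ∈ h, c.1 ≠ v ∧ c.1 ≠ w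

/-- Pair: for some value `v`, exactly 2 cards of the hand have value `v` and
the remaining 3 cards have three further pairwise distinct values. -/
def Pair (h : Finset Card) : Prop :=
  ∃ v : Fin 13, countValue h v = 2 ∧
    ∃ a b c : Fin 13, a ≠ b ∧ a ≠ c ∧ b ≠ c ∧ a ≠ v ∧ b ≠ v ∧ c ≠ v ∧
      countValue h a = 1 ∧ countValue h b = 1 ∧ countValue h c = 1

/-- High Card: the 5 cards have 5 pairwise distinct values, the set of values
is not a straight value-set, and the cards are not all of the same suit. -/
def HighCard (h : Finset Card) : Prop :=
  (handValues h).card = 5 ∧ handValues h ∉ straightValueSets ∧ ¬ SameSuit h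

instance : DecidablePred RoyalFlush := fun h => by unfold RoyalFlush; infer_instance

instance : DecidablePred StraightFlush := fun h => by unfold StraightFlush; infer_instance

instance : DecidablePred FourOfAKind := fun h => by unfold FourOfAKind; infer_instance

instance : DecidablePred FullHouse := fun h => by unfold FullHouse; infer_instance

instance : DecidablePred Flush := fun h => by unfold Flush; infer_instance

instance : DecidablePred Straight := fun h => by unfold Straight; infer_instance

instance : DecidablePred ThreeOfAKind := fun h => by unfold ThreeOfAKind; infer_instance

instance : DecidablePred TwoPair := fun h => by unfold TwoPair; infer_instance

instance : DecidablePred Pair := fun h => by unfold Pair; infer_instance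

instance : DecidablePred HighCard := fun h => by unfold HighCard; infer_instance

/-- The hand consisting of the cards `(v, f v)` for `v ∈ V`. -/
def handOf (V : Finset (Fin 13)) (f : V → Fin 4) : Finset Card :=
  Finset.univ.image fun v : V => ((v : Fin 13), f v)

lemma mem_handOf (V : Finset (Fin 13)) (f : V → Fin 4) (c : Card) :
    c ∈ handOf V f ↔ ∃ h : c.1 ∈ V, f ⟨c.1, h⟩ = c.2 := by
  obtain ⟨a, b⟩ := c
  simp only [handOf, Finset.mem_image, Finset.mem_univ, true_and, Prod.mk.injEq]
  constructor
  · rintro ⟨⟨x, hx⟩, rfl, rfl⟩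
    exact ⟨hx, rfl⟩
  · rintro ⟨hx, h⟩
    exact ⟨⟨a, hx⟩, rfl, h⟩

lemma handOf_injective (V : Finset (Fin 13)) : Function.Injective (handOf V) := by
  intro f g h
  funext v
  have hv : ((v : Fin 13), f v) ∈ handOf V g := by
    rw [← h, mem_handOf]
    exact ⟨v.2, rfl⟩
  rw [mem_handOf] at hv
  obtain ⟨_, hv⟩ := hv
  exact hv.symm

lemma card_handOf (V : Finset (Fin 13)) (f : V → Fin 4) : (handOf V f).card = V.card := by
  rw [handOf, Finset.card_image_of_injective]
  · simp
  · intro a b h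
    exact Subtype.ext (Prod.mk.inj h).1

lemma handValues_handOf (V : Finset (Fin 13)) (f : V → Fin 4) :
    handValues (handOf V f) = V := by
  ext v
  simp only [handValues, Finset.mem_image]
  constructor
  · rintro ⟨c, hc, rfl⟩
    exact ((mem_handOf V f c).1 hc).1
  · intro hv
    exact ⟨(v, f ⟨v, hv⟩), (mem_handOf V f _).2 ⟨hv, rfl⟩, rfl⟩

lemma sameSuit_handOf (V : Finset (Fin 13)) (f : V → Fin 4) :
    SameSuit (handOf V f) ↔ ∃ s, (fun _ => s) = f := by
  constructor
  · rintro ⟨s, hs⟩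
    refine ⟨s, funext fun v => ?_⟩
    exact (hs (v, f v) ((mem_handOf V f _).2 ⟨v.2, rfl⟩)).symm
  · rintro ⟨s, rfl⟩
    refine ⟨s, fun c hc => ?_⟩
    obtain ⟨_, h⟩ := (mem_handOf V _ c).1 hc
    exact h.symm

lemma exists_handOf (h : Finset Card) (hc : (handValues h).card = h.card) :
    ∃ f, handOf (handValues h) f = h := by
  have inj : Set.InjOn Prod.fst (h : Set Card) := Finset.card_image_iff.1 hc
  have ex : ∀ v : handValues h, ∃ s, ((v : Fin 13), s) ∈ h := by
    rintro ⟨v, hv⟩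
    obtain ⟨⟨a, b⟩, hab, rfl⟩ := Finset.mem_image.1 hv
    exact ⟨b, hab⟩
  choose f hf using ex
  refine ⟨f, Finset.eq_of_subset_of_card_le ?_ ?_⟩
  · intro c hc
    obtain ⟨a, b⟩ := c
    obtain ⟨hv, hb⟩ := (mem_handOf _ f _).1 hc
    have h' := hf ⟨a, hv⟩
    change f ⟨a, hv⟩ = b at hb
    rwa [hb] at h'
  · rw [card_handOf, hc]

lemma card_nonconstant (V : Finset (Fin 13)) (hV : V.card = 5) :
    (Finset.univ.filter fun f : V → Fin 4 => ¬ SameSuit (handOf V f)).card = 1020 := by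
  have hne : Nonempty V := by
    obtain ⟨x, hx⟩ := Finset.card_pos.1 (by omega : 0 < V.card)
    exact ⟨⟨x, hx⟩⟩
  have h1 : (Finset.univ.filter fun f : V → Fin 4 => SameSuit (handOf V f)).card = 4 := by
    have : (Finset.univ.filter fun f : V → Fin 4 => SameSuit (handOf V f))
        = Finset.univ.image (fun (s : Fin 4) (_ : V) => s) := by
      ext f
      simp [sameSuit_handOf]
    rw [this, Finset.card_image_of_injective]
    · simp
    · exact fun a b h => congrFun h hne.some
  have h2 := Finset.card_filter_add_card_filter_not (s := Finset.univ)
    (fun f : V → Fin 4 => SameSuit (handOf V f))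
  have h3 : (Finset.univ : Finset (V → Fin 4)).card = 1024 := by
    simp [hV]
  omega

lemma card_straightValueSets : straightValueSets.card = 10 := by decide +kernel

lemma card_of_mem_straightValueSets : ∀ V ∈ straightValueSets, V.card = 5 := by
  intro V hV
  simp only [straightValueSets, Finset.mem_insert, Finset.mem_singleton] at hV
  rcases hV with rfl | rfl | rfl | rfl | rfl | rfl | rfl | rfl | rfl | rfl <;> rfl

/-- There are exactly 10200 Straight hands. -/
theorem card_straight : (pokerHands.filter Straight).card = 10200 := by
  rw [Finset.card_eq_sum_card_fiberwise (f := handValues) (t := straightValueSets)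
    (fun h hh => (Finset.mem_filter.1 hh).2.1)]
  suffices H : ∀ V ∈ straightValueSets,
      ((pokerHands.filter Straight).filter fun h => handValues h = V).card = 1020 by
    rw [Finset.sum_congr rfl H, Finset.sum_const, card_straightValueSets]
    rfl
  intro V hV
  have hV5 := card_of_mem_straightValueSets V hV
  rw [← card_nonconstant V hV5, ← Finset.card_image_of_injective _ (handOf_injective V)]
  congr 1
  ext h
  simp only [Finset.mem_filter, Finset.mem_image, Finset.mem_univ, true_and, pokerHands,
    Finset.mem_powersetCard, Finset.subset_univ, Straight]
  constructor
  · rintro ⟨⟨h5, _, hs⟩, rfl⟩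
    obtain ⟨f, hf⟩ := exists_handOf h (hV5.trans h5.symm)
    exact ⟨f, by rwa [hf], hf⟩
  · rintro ⟨f, hs, rfl⟩
    rw [handValues_handOf, card_handOf]
    exact ⟨⟨hV5, hV, hs⟩, rfl⟩
end

section
/- The number of Pair hands — 5-card hands for which there exists a value v such that exactly 2 cards of the hand have value v and the remaining 3 cards have three further pairwise distinct values (all distinct from v) — equals 1098240. -/
/-- Count profile of a pair hand with pair value `v` and kicker values `S`. -/
def pairProfile (v : Fin 13) (S : Finset (Fin 13)) (u : Fin 13) : ℕ :=
  if u = v then 2 else if u ∈ S then 1 else 0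

/-- Hands with a given count profile. -/
def profileHands (k : Fin 13 → ℕ) : Finset (Finset Card) :=
  Finset.univ.filter fun h => ∀ u, countValue h u = k u

theorem mem_profileHands (k : Fin 13 → ℕ) (h : Finset Card) :
    h ∈ profileHands k ↔ ∀ u, countValue h u = k u := by
  simp [profileHands]

theorem countValue_eq (h : Finset Card) (u : Fin 13) :
    countValue h u = (Finset.univ.filter fun s : Fin 4 => (u, s) ∈ h).card := by
  unfold countValue
  symm
  refine Finset.card_bij (fun s _ => (u, s)) ?_ ?_ ?_
  · intro s hs
    simpa using hs
  · intro s _ t _ hst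
    simpa using hst
  · rintro ⟨a, s⟩ hb
    simp only [Finset.mem_filter] at hb
    obtain ⟨h1, rfl⟩ := hb
    exact ⟨s, by simpa using h1, rfl⟩

theorem card_profileHands (k : Fin 13 → ℕ) :
    (profileHands k).card = ∏ u, Nat.choose 4 (k u) := by
  have h1 : (Fintype.piFinset fun u : Fin 13 =>
      (Finset.univ : Finset (Fin 4)).powersetCard (k u)).card = ∏ u, Nat.choose 4 (k u) := by
    simp [Fintype.card_piFinset]
  rw [← h1]
  refine Finset.card_nbij' (fun h u => Finset.univ.filter fun s : Fin 4 => (u, s) ∈ h)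
    (fun f => Finset.univ.filter fun c : Card => c.2 ∈ f c.1) ?_ ?_ ?_ ?_
  · intro h hh
    have hh := (mem_profileHands k h).1 hh
    simp only [Finset.mem_coe, Fintype.mem_piFinset, Finset.mem_powersetCard]
    intro u
    exact ⟨Finset.subset_univ _, by rw [← countValue_eq, hh]⟩
  · intro f hf
    simp only [Finset.mem_coe, Fintype.mem_piFinset, Finset.mem_powersetCard] at hf
    refine (mem_profileHands k _).2 fun u => ?_
    rw [countValue_eq, ← (hf u).2]
    congr 1
    ext s
    simp
  · intro h _
    ext c
    simp
  · intro f _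
    funext u
    ext s
    simp

theorem card_eq_sum_countValue (h : Finset Card) : h.card = ∑ u, countValue h u :=
  Finset.card_eq_sum_card_fiberwise (fun _ _ => Finset.mem_coe.2 (Finset.mem_univ _))

theorem sum_pairProfile (v : Fin 13) (S : Finset (Fin 13))
    (hS : S ∈ (Finset.univ.erase v).powersetCard 3) : ∑ u, pairProfile v S u = 5 := by
  rw [Finset.mem_powersetCard] at hS
  have hv : v ∉ S := fun hh => by simpa using hS.1 hh
  have : ∀ u, pairProfile v S u = (if u = v then 2 else 0) + (if u ∈ S then 1 else 0) := by
    intro u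
    unfold pairProfile
    by_cases hu : u = v
    · subst hu
      simp [hv]
    · simp [hu]
  simp [this, Finset.sum_add_distrib, hS.2]

theorem prod_pairProfile (v : Fin 13) (S : Finset (Fin 13))
    (hS : S ∈ (Finset.univ.erase v).powersetCard 3) :
    ∏ u, Nat.choose 4 (pairProfile v S u) = 384 := by
  rw [Finset.mem_powersetCard] at hS
  have hv : v ∉ S := fun hh => by simpa using hS.1 hh
  have : ∀ u, Nat.choose 4 (pairProfile v S u)
      = (if u = v then 6 else 1) * (if u ∈ S then 4 else 1) := by
    intro u
    unfold pairProfile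
    by_cases hu : u = v
    · subst hu
      simp [hv, Nat.choose]
    · by_cases h2 : u ∈ S <;> simp [hu, h2]
  rw [Finset.prod_congr rfl fun u _ => this u, Finset.prod_mul_distrib]
  simp [Finset.prod_ite, hS.2, Finset.filter_eq']

theorem pair_iff (h : Finset Card) :
    (h ∈ pokerHands ∧ Pair h) ↔ ∃ v, ∃ S ∈ (Finset.univ.erase v).powersetCard 3,
      ∀ u, countValue h u = pairProfile v S u := by
  constructor
  · rintro ⟨hp, v, hv, a, b, c, hab, hac, hbc, hav, hbv, hcv, ha, hb, hc⟩
    have hS : ({a, b, c} : Finset (Fin 13)) ∈ (Finset.univ.erase v).powersetCard 3 := by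
      rw [Finset.mem_powersetCard]
      refine ⟨?_, Finset.card_eq_three.2 ⟨a, b, c, hab, hac, hbc, rfl⟩⟩
      intro x hx
      simp only [Finset.mem_insert, Finset.mem_singleton] at hx
      rcases hx with rfl | rfl | rfl <;> simp [*]
    refine ⟨v, {a, b, c}, hS, ?_⟩
    have h5 : ∑ u, countValue h u = 5 := by
      rw [← card_eq_sum_countValue]
      exact (Finset.mem_powersetCard.1 hp).2
    have hle : ∀ u ∈ Finset.univ, pairProfile v {a, b, c} u ≤ countValue h u := by
      intro u _
      unfold pairProfile
      split_ifs with h1 h2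
      · rw [h1, hv]
      · simp only [Finset.mem_insert, Finset.mem_singleton] at h2
        rcases h2 with rfl | rfl | rfl <;> omega
      · exact Nat.zero_le _
    intro u
    exact ((Finset.sum_eq_sum_iff_of_le hle).1
      (by rw [h5, sum_pairProfile v _ hS]) u (Finset.mem_univ _)).symm
  · rintro ⟨v, S, hS, hk⟩
    constructor
    · refine Finset.mem_powersetCard.2 ⟨Finset.subset_univ _, ?_⟩
      rw [card_eq_sum_countValue, Finset.sum_congr rfl fun u _ => hk u, sum_pairProfile v S hS]
    · rw [Finset.mem_powersetCard] at hS
      obtain ⟨a, b, c, hab, hac, hbc, rfl⟩ := Finset.card_eq_three.1 hS.2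
      have hav : a ≠ v := Finset.ne_of_mem_erase (hS.1 (by simp))
      have hbv : b ≠ v := Finset.ne_of_mem_erase (hS.1 (by simp))
      have hcv : c ≠ v := Finset.ne_of_mem_erase (hS.1 (by simp))
      refine ⟨v, ?_, a, b, c, hab, hac, hbc, hav, hbv, hcv, ?_, ?_, ?_⟩ <;>
        simp [pairProfile, *]

/-- There are exactly 1098240 Pair hands. -/
theorem card_pair : (pokerHands.filter Pair).card = 1098240 := by
  have key : pokerHands.filter Pair = Finset.univ.biUnion fun v : Fin 13 =>
      ((Finset.univ.erase v).powersetCard 3).biUnion fun S => profileHands (pairProfile v S) := by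
    ext h
    simp only [Finset.mem_filter, pair_iff, Finset.mem_biUnion, Finset.mem_univ, true_and,
      mem_profileHands]
  rw [key, Finset.card_biUnion]
  · have : ∀ v : Fin 13, (((Finset.univ.erase v).powersetCard 3).biUnion
        fun S => profileHands (pairProfile v S)).card = 220 * 384 := by
      intro v
      rw [Finset.card_biUnion]
      · rw [Finset.sum_congr rfl fun S hS => by
          rw [card_profileHands, prod_pairProfile v S hS]]
        rw [Finset.sum_const, Finset.card_powersetCard, Finset.card_erase_of_mem (Finset.mem_univ v)]
        simp [Nat.choose]
      · intro S hS T hT hne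
        rw [Function.onFun, Finset.disjoint_left]
        intro h h1 h2
        rw [mem_profileHands] at h1 h2
        apply hne
        ext u
        have e : pairProfile v S u = pairProfile v T u := by rw [← h1, ← h2]
        have hvS : v ∉ S := fun hh => by simpa using (Finset.mem_powersetCard.1 (Finset.mem_coe.1 hS)).1 hh
        have hvT : v ∉ T := fun hh => by simpa using (Finset.mem_powersetCard.1 (Finset.mem_coe.1 hT)).1 hh
        by_cases hu : u = v
        · subst hu
          simp [hvS, hvT]
        · by_cases a : u ∈ S <;> by_cases b : u ∈ T <;> simp_all [pairProfile]
    simp [this]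
  · intro v _ w _ hne
    rw [Function.onFun, Finset.disjoint_left]
    intro h h1 h2
    simp only [Finset.mem_biUnion, mem_profileHands] at h1 h2
    obtain ⟨S, _, h1⟩ := h1
    obtain ⟨T, _, h2⟩ := h2
    have e : pairProfile v S v = pairProfile w T v := by rw [← h1, ← h2]
    unfold pairProfile at e
    rw [if_pos rfl, if_neg hne] at e
    split_ifs at e <;> omega
end
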